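/- Let T = (t_{ij}) be a positive m×n real matrix and X = X_Γ(T). Let i ∈ [m] and let j, ℓ ∈ [n] with j ≤ ℓ. Then the sum, over all paths P from row vertex i to column vertex j whose first Γ-turn (i₁, j₁) satisfies j₁ ≤ ℓ, of the weights w(P), equals det X[{i, i+1⋯}, {j, ℓ+1⋯}] / det X[{i+1⋯}, {ℓ+1⋯}] (with the convention that the determinant of an empty submatrix is 1). -/

import Mathlib

/-!
Write `R i j b` for the sum of the weights of the paths from row vertex `i` to column vertex `j` all
of whose turns lie in the first `b` columns (`restrictedSum`; indices of `i`, `j` start at `0`). The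
left-hand side is `R i j (l + 1)`, and the entries of `X = X_Γ(T)` are `R i j n`.

The proof uses row operations in place of non-intersecting path systems. Paths from row `i` whose
first turn is in column `b` are matched with the paths from row `i + 1` whose turns lie in columns
`≤ b`: slide the first turn one row down, or delete it if the next turn is already in row `i + 1`.
The weight changes by the factor `t_{i,b} / t_{i+1,b}`, which gives
`R i j b = R i j (b + 1) - (t_{i,b} / t_{i+1,b}) * R (i + 1) j (b + 1)` (`restrictedSum_row_op`).
Iterating from `b = n` downwards, the row `R i · b` is row `i` of `X` plus a combination of the next
`n - b` rows of `X` (`restrictedSum_eq_row_comb`). These are exactly the other rows of the bordered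
minor `det X[{i, i+1⋯}, {j, l+1⋯}]`. Since `R i j' (l + 1) = 0` for `j' > l`, its top row may
therefore be replaced by `(R i j (l + 1), 0, …, 0)`, and the bordered minor equals `R i j (l + 1)`
times the contiguous one (`borderMinorTL_XGamma`). Applied with `j = l`, where `R i l (l + 1)` is
`t_{i,l} > 0`, the same identity shows inductively that the contiguous minors are positive
(`contigMinorTL_XGamma_pos`), so division is legitimate.

When the rows run out before the columns, the row operations are not available in the last row.
The combination then reproduces `R i · b` only in the columns `j` with `j + i + 2 ≤ b + m`, which
are enough for the minor because that minor is correspondingly narrower.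
-/

open Finset

/-- A real matrix is totally positive if every minor (determinant of a square submatrix
obtained by selecting rows and columns in increasing order) is positive. -/
def TotallyPositive {m n : ℕ} (A : Matrix (Fin m) (Fin n) ℝ) : Prop :=
  ∀ (r : ℕ) (f : Fin r → Fin m) (g : Fin r → Fin n),
    StrictMono f → StrictMono g → 0 < (A.submatrix f g).det

/-- A matrix is (strongly) positive if all of its entries are positive. -/
def EntrywisePos {m n : ℕ} (A : Matrix (Fin m) (Fin n) ℝ) : Prop :=
  ∀ i j, 0 < A i j

/-- The weight of the Γ-path encoded by the pair of finsets `(I, J)`.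
A Γ-path with Γ-turns `(i₁,j₁), …, (i_p,j_p)`, where `i₁ < i₂ < ⋯ < i_p` and
`j₁ > j₂ > ⋯ > j_p`, corresponds to the pair `I = {i₁,…,i_p}`, `J = {j₁,…,j_p}`;
the path runs from row vertex `i₁ = min I` to column vertex `j_p = min J`.
Its weight is `t_{i₁j₁} · ∏_{s=1}^{p−1} t_{i_{s+1} j_s}⁻¹ · t_{i_{s+1} j_{s+1}}`. -/
noncomputable def gammaWeight {m n : ℕ} (T : Matrix (Fin m) (Fin n) ℝ)
    (I : Finset (Fin m)) (J : Finset (Fin n)) : ℝ :=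
  if h : I.Nonempty ∧ J.Nonempty ∧ I.card = J.card then
    let p := I.card
    let row : ℕ → Fin m := fun s => (I.sort (· ≤ ·)).getD s (I.min' h.1)
    let col : ℕ → Fin n := fun s => (J.sort (· ≤ ·)).getD (p - 1 - s) (J.min' h.2.1)
    T (row 0) (col 0) *
      ∏ s ∈ Finset.range (p - 1),
        ((T (row (s + 1)) (col s))⁻¹ * T (row (s + 1)) (col (s + 1)))
  else 0

/-- The Γ-path-sum matrix `X_Γ(T)`: its `(i,j)` entry is the sum of the weights of all
Γ-paths from row vertex `i` to column vertex `j`. -/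
noncomputable def XGamma {m n : ℕ} (T : Matrix (Fin m) (Fin n) ℝ) :
    Matrix (Fin m) (Fin n) ℝ :=
  Matrix.of fun i j =>
    ∑ I ∈ Finset.univ.filter (fun I : Finset (Fin m) => I.min = (i : WithTop (Fin m))),
      ∑ J ∈ Finset.univ.filter (fun J : Finset (Fin n) =>
          J.min = (j : WithTop (Fin n)) ∧ J.card = I.card),
        gammaWeight T I J

/-- The weight of the L-path encoded by the pair of finsets `(I, J)`.
An L-path with turns `(i₁,j₁), …, (i_p,j_p)`, where `i₁ > i₂ > ⋯ > i_p` and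
`j₁ < j₂ < ⋯ < j_p`, corresponds to `I = {i₁,…,i_p}`, `J = {j₁,…,j_p}`;
the path runs from row vertex `i₁ = max I` to column vertex `j_p = max J`. -/
noncomputable def lWeight {m n : ℕ} (T : Matrix (Fin m) (Fin n) ℝ)
    (I : Finset (Fin m)) (J : Finset (Fin n)) : ℝ :=
  if h : I.Nonempty ∧ J.Nonempty ∧ I.card = J.card then
    let p := I.card
    let row : ℕ → Fin m := fun s => (I.sort (· ≤ ·)).getD (p - 1 - s) (I.min' h.1)
    let col : ℕ → Fin n := fun s => (J.sort (· ≤ ·)).getD s (J.min' h.2.1)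
    T (row 0) (col 0) *
      ∏ s ∈ Finset.range (p - 1),
        ((T (row (s + 1)) (col s))⁻¹ * T (row (s + 1)) (col (s + 1)))
  else 0

/-- The L-path-sum matrix `X_L(T)`. -/
noncomputable def XL {m n : ℕ} (T : Matrix (Fin m) (Fin n) ℝ) :
    Matrix (Fin m) (Fin n) ℝ :=
  Matrix.of fun i j =>
    ∑ I ∈ Finset.univ.filter (fun I : Finset (Fin m) => I.max = (i : WithBot (Fin m))),
      ∑ J ∈ Finset.univ.filter (fun J : Finset (Fin n) =>
          J.max = (j : WithBot (Fin n)) ∧ J.card = I.card),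
        lWeight T I J

/-- The set of internal vertices traversed by the Γ-path encoded by `(I, J)`:
horizontal segments `{(i_s, b) : j_s ≤ b ≤ j_{s-1}}` (with `j₀` interpreted as the last
column) and vertical segments `{(a, j_s) : i_s ≤ a ≤ i_{s+1}}` (with `i_{p+1}` interpreted
as the last row). -/
def pathVerts {m n : ℕ} (I : Finset (Fin m)) (J : Finset (Fin n)) :
    Finset (Fin m × Fin n) :=
  Finset.univ.filter fun v =>
    (∃ s ∈ Finset.range I.card,
        v.1 = (I.sort (· ≤ ·)).getD s v.1 ∧
        (J.sort (· ≤ ·)).getD (J.card - 1 - s) v.2 ≤ v.2 ∧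
        (s = 0 ∨ v.2 ≤ (J.sort (· ≤ ·)).getD (J.card - s) v.2)) ∨
    (∃ s ∈ Finset.range I.card,
        v.2 = (J.sort (· ≤ ·)).getD (J.card - 1 - s) v.2 ∧
        (I.sort (· ≤ ·)).getD s v.1 ≤ v.1 ∧
        (s + 1 = I.card ∨ v.1 ≤ (I.sort (· ≤ ·)).getD (s + 1) v.1))

/-- The sequence of matrices produced by Cauchon's Algorithm: `cauchonSeq X t` is the
matrix obtained after performing the first `t` steps, the steps being indexed by the
positions `(i,j) ∈ [m]×[n]` (1-based) in increasing reverse lexicographic order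
(`(m,n)` first); the step at 1-based position `(i,j)` is performed on `cauchonSeq X t`
with `t = (m−i)·n + (n−j)`, so that the matrix `X^{(i,j)}` of Cauchon's Algorithm is
`cauchonSeq X ((m−i)·n + (n−j))`. -/
noncomputable def cauchonSeq {m n : ℕ} (X : Matrix (Fin m) (Fin n) ℝ) :
    ℕ → Matrix (Fin m) (Fin n) ℝ
  | 0 => X
  | t + 1 =>
    let Y := cauchonSeq X t
    Matrix.of fun k l =>
      let i0 : Fin m := ⟨m - 1 - t / n,
        lt_of_le_of_lt (Nat.sub_le _ _) (by have := k.isLt; omega)⟩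
      let j0 : Fin n := ⟨n - 1 - t % n,
        lt_of_le_of_lt (Nat.sub_le _ _) (by have := l.isLt; omega)⟩
      if (k : ℕ) < (i0 : ℕ) ∧ (l : ℕ) < (j0 : ℕ) then
        Y k l - Y k j0 * (Y i0 j0)⁻¹ * Y i0 l
      else Y k l

/-- The output `T = X^{(1,1)}` of Cauchon's Algorithm. -/
noncomputable def cauchonOutput {m n : ℕ} (X : Matrix (Fin m) (Fin n) ℝ) :
    Matrix (Fin m) (Fin n) ℝ :=
  cauchonSeq X ((m - 1) * n + (n - 1))

/-- `contigMinorTL A i j` (1-based `i`, `j`) is the minor `det A[{i⋯},{j⋯}]` of the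
largest contiguous submatrix of `A` with top-left corner `(i,j)`, i.e. with rows
`i, …, i+k` and columns `j, …, j+k` where `k = min(M−i, N−j)`; it is `1` (the empty
determinant) if `(i,j)` is out of range. -/
noncomputable def contigMinorTL {M N : ℕ} (A : Matrix (Fin M) (Fin N) ℝ) (i j : ℕ) : ℝ :=
  if h : 1 ≤ i ∧ i ≤ M ∧ 1 ≤ j ∧ j ≤ N then
    (A.submatrix
      (fun s : Fin (min (M - i) (N - j) + 1) =>
        (⟨i - 1 + (s : ℕ), by have := s.isLt; omega⟩ : Fin M))
      (fun s : Fin (min (M - i) (N - j) + 1) =>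
        (⟨j - 1 + (s : ℕ), by have := s.isLt; omega⟩ : Fin N))).det
  else 1

/-- `borderMinorTL A i₀ j₀ i j` (1-based indices, `i₀ < i`, `j₀ < j`) is the minor
`det A[{i₀, i⋯},{j₀, j⋯}]` with rows `{i₀} ∪ {i, …, i+k}` and columns
`{j₀} ∪ {j, …, j+k}` where `k = min(M−i, N−j)`; when the contiguous part is out of range
(`i > M` or `j > N`) it is the single entry `A[{i₀},{j₀}]`, and it is `1` if `(i₀,j₀)`
is out of range. -/
noncomputable def borderMinorTL {M N : ℕ} (A : Matrix (Fin M) (Fin N) ℝ)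
    (i₀ j₀ i j : ℕ) : ℝ :=
  if h : 1 ≤ i₀ ∧ i₀ ≤ M ∧ 1 ≤ j₀ ∧ j₀ ≤ N then
    if h2 : i₀ < i ∧ i ≤ M ∧ j₀ < j ∧ j ≤ N then
      (A.submatrix
        (fun s : Fin (min (M - i) (N - j) + 2) =>
          if (s : ℕ) = 0 then (⟨i₀ - 1, by omega⟩ : Fin M)
          else ⟨i - 1 + ((s : ℕ) - 1), by have := s.isLt; omega⟩)
        (fun s : Fin (min (M - i) (N - j) + 2) =>
          if (s : ℕ) = 0 then (⟨j₀ - 1, by omega⟩ : Fin N)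
          else ⟨j - 1 + ((s : ℕ) - 1), by have := s.isLt; omega⟩)).det
    else A ⟨i₀ - 1, by omega⟩ ⟨j₀ - 1, by omega⟩
  else 1

/-- `borderMinorBR A i j i₀ j₀` (1-based indices, `i < i₀`, `j < j₀`) is the minor
`det A[{⋯i, i₀},{⋯j, j₀}]` with rows `{i−k, …, i} ∪ {i₀}` and columns
`{j−k, …, j} ∪ {j₀}` where `k = min(i−1, j−1)`; when the contiguous part is empty
(`i = 0` or `j = 0`) it is the single entry `A[{i₀},{j₀}]`, and it is `1` if `(i₀,j₀)`
is out of range. -/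
noncomputable def borderMinorBR {M N : ℕ} (A : Matrix (Fin M) (Fin N) ℝ)
    (i j i₀ j₀ : ℕ) : ℝ :=
  if h : 1 ≤ i₀ ∧ i₀ ≤ M ∧ 1 ≤ j₀ ∧ j₀ ≤ N then
    if h2 : 1 ≤ i ∧ i < i₀ ∧ 1 ≤ j ∧ j < j₀ then
      (A.submatrix
        (fun s : Fin (min (i - 1) (j - 1) + 2) =>
          if (s : ℕ) = min (i - 1) (j - 1) + 1 then (⟨i₀ - 1, by omega⟩ : Fin M)
          else ⟨i - 1 - min (i - 1) (j - 1) + (s : ℕ), by have := s.isLt; omega⟩)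
        (fun s : Fin (min (i - 1) (j - 1) + 2) =>
          if (s : ℕ) = min (i - 1) (j - 1) + 1 then (⟨j₀ - 1, by omega⟩ : Fin N)
          else ⟨j - 1 - min (i - 1) (j - 1) + (s : ℕ), by have := s.isLt; omega⟩)).det
    else A ⟨i₀ - 1, by omega⟩ ⟨j₀ - 1, by omega⟩
  else 1

/-! ### Weights of paths -/

lemma sort_insert_max {n : ℕ} (J : Finset (Fin n)) (b : Fin n) (hb : ∀ x ∈ J, x < b) :
    (insert b J).sort (· ≤ ·) = J.sort (· ≤ ·) ++ [b] := by
  have hbJ : b ∉ J := fun h => lt_irrefl _ (hb b h)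
  symm
  apply List.Perm.eq_of_pairwise (le := (· ≤ ·))
  · intro a b _ _ h1 h2
    exact le_antisymm h1 h2
  · rw [List.pairwise_append]
    refine ⟨J.pairwise_sort _, by simp, ?_⟩
    intro x hx y hy
    simp only [List.mem_singleton] at hy
    subst hy
    exact (hb x (by simpa using hx)).le
  · exact Finset.pairwise_sort _ _
  · rw [← Multiset.coe_eq_coe, Finset.sort_eq, Finset.insert_val_of_notMem hbJ,
      ← Multiset.coe_add, Finset.sort_eq, Multiset.coe_singleton, add_comm,
      Multiset.singleton_add]

lemma gammaWeight_singleton {m n : ℕ} (T : Matrix (Fin m) (Fin n) ℝ) (a : Fin m) (b : Fin n) :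
    gammaWeight T {a} {b} = T a b := by
  simp [gammaWeight]

/-- Prepending a turn at `(a, b)` to a path whose first row is `a'` multiplies its weight by
`t_{a,b} / t_{a',b}`. -/
lemma gammaWeight_insert {m n : ℕ} (T : Matrix (Fin m) (Fin n) ℝ) (I : Finset (Fin m))
    (J : Finset (Fin n)) (a a' : Fin m) (b : Fin n) (ha : ∀ x ∈ I, a < x) (hb : ∀ x ∈ J, x < b)
    (hcard : J.card = I.card) (ha' : I.min = a') :
    gammaWeight T (insert a I) (insert b J) = T a b * (T a' b)⁻¹ * gammaWeight T I J := by
  have hI : I.Nonempty := ⟨a', Finset.mem_of_min ha'⟩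
  have hJ : J.Nonempty := by rw [← Finset.card_pos, hcard, Finset.card_pos]; exact hI
  have haI : a ∉ I := fun h => lt_irrefl _ (ha a h)
  have hbJ : b ∉ J := fun h => lt_irrefl _ (hb b h)
  have hsI : (insert a I).sort (· ≤ ·) = a :: I.sort (· ≤ ·) :=
    Finset.sort_insert _ (fun x hx => (ha x hx).le) haI
  have hsJ := sort_insert_max J b hb
  have hc1 : (insert a I).card = I.card + 1 := Finset.card_insert_of_notMem haI
  have hc2 : (insert b J).card = J.card + 1 := Finset.card_insert_of_notMem hbJ
  have hlI : (I.sort (· ≤ ·)).length = I.card := Finset.length_sort _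
  have hlJ : (J.sort (· ≤ ·)).length = J.card := Finset.length_sort _
  have h1 : (insert a I).Nonempty ∧ (insert b J).Nonempty ∧
      (insert a I).card = (insert b J).card := ⟨by simp, by simp, by omega⟩
  have h2 : I.Nonempty ∧ J.Nonempty ∧ I.card = J.card := ⟨hI, hJ, hcard.symm⟩
  obtain ⟨q, hq⟩ : ∃ q, I.card = q + 1 := ⟨I.card - 1, by have := Finset.card_pos.2 hI; omega⟩
  have hrow0 : ∀ d, (I.sort (· ≤ ·)).getD 0 d = a' := by
    intro d
    rw [List.getD_eq_getElem _ _ (by omega)]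
    refine (Finset.sorted_zero_eq_min'_aux I (by omega) hI).trans ?_
    exact (Finset.min'_eq_iff _ _ _).2 ⟨Finset.mem_of_min ha', fun x hx => Finset.min_le_of_eq hx ha'⟩
  unfold gammaWeight
  rw [dif_pos h1, dif_pos h2]
  simp only [hsI, hsJ, hc1, hq, Nat.add_sub_cancel]
  have hL : ∀ s d d', s ≤ q → (I.sort (· ≤ ·)).getD s d = (I.sort (· ≤ ·)).getD s d' := by
    intro s d d' hs
    rw [List.getD_eq_getElem _ _ (by omega), List.getD_eq_getElem _ _ (by omega)]
  have hC : ∀ s d d', s ≤ q →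
      (J.sort (· ≤ ·) ++ [b]).getD s d = (J.sort (· ≤ ·)).getD s d' := by
    intro s d d' hs
    rw [List.getD_append _ _ _ _ (by omega), List.getD_eq_getElem _ _ (by omega),
      List.getD_eq_getElem _ _ (by omega)]
  have hC0 : ∀ d, (J.sort (· ≤ ·) ++ [b]).getD (q + 1) d = b := by
    intro d
    rw [List.getD_append_right _ _ _ _ (by omega)]
    have : q + 1 - (J.sort (· ≤ ·)).length = 0 := by omega
    rw [this]; rfl
  rw [Finset.prod_range_succ']
  simp only [List.getD_cons_succ, List.getD_cons_zero, Nat.sub_zero, hC0, zero_add, hrow0]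
  rw [hC (q + 1 - 1) _ (J.min' hJ) (by omega)]
  have : ∀ s ∈ Finset.range q,
    ((T ((I.sort (· ≤ ·)).getD (s + 1) ((insert a I).min' h1.1))
        ((J.sort (· ≤ ·) ++ [b]).getD (q + 1 - (s + 1)) ((insert b J).min' h1.2.1)))⁻¹ *
      T ((I.sort (· ≤ ·)).getD (s + 1) ((insert a I).min' h1.1))
        ((J.sort (· ≤ ·) ++ [b]).getD (q + 1 - (s + 1 + 1)) ((insert b J).min' h1.2.1))) =
    ((T ((I.sort (· ≤ ·)).getD (s + 1) (I.min' hI))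
        ((J.sort (· ≤ ·)).getD (q - s) (J.min' hJ)))⁻¹ *
      T ((I.sort (· ≤ ·)).getD (s + 1) (I.min' hI))
        ((J.sort (· ≤ ·)).getD (q - (s + 1)) (J.min' hJ))) := by
    intro s hs
    have hs := Finset.mem_range.1 hs
    rw [hL (s + 1) _ (I.min' hI) (by omega), hC _ _ (J.min' hJ) (by omega),
      hC _ _ (J.min' hJ) (by omega)]
    rw [show q + 1 - (s + 1) = q - s by omega, show q + 1 - (s + 1 + 1) = q - (s + 1) by omega]
  rw [Finset.prod_congr rfl this]
  simp only [Nat.add_sub_cancel]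
  ring

/-! ### Restricted path sums and their recursion -/

/-- The sum of the weights of all Γ-paths from row vertex `i` to column vertex `j` all of whose
turns lie in the first `b` columns (equivalently, whose first turn does). -/
noncomputable def restrictedSum {m n : ℕ} (T : Matrix (Fin m) (Fin n) ℝ) (i : Fin m) (j : Fin n)
    (b : ℕ) : ℝ :=
  ∑ I ∈ Finset.univ.filter (fun I : Finset (Fin m) => I.min = (i : WithTop (Fin m))),
    ∑ J ∈ Finset.univ.filter (fun J : Finset (Fin n) =>
        J.min = (j : WithTop (Fin n)) ∧ J.card = I.card ∧ ∀ x ∈ J, (x : ℕ) < b),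
      gammaWeight T I J

/-- The pairs `(I, J)` encoding the paths summed in `restrictedSum`. -/
def restrictedPaths {m n : ℕ} (i : Fin m) (j : Fin n) (b : ℕ) :
    Finset (Finset (Fin m) × Finset (Fin n)) :=
  Finset.univ.filter fun P =>
    (i ∈ P.1 ∧ ∀ x ∈ P.1, i ≤ x) ∧ (j ∈ P.2 ∧ ∀ x ∈ P.2, j ≤ x) ∧ P.2.card = P.1.card ∧
      ∀ x ∈ P.2, (x : ℕ) < b

lemma min_eq_coe_iff {n : ℕ} (I : Finset (Fin n)) (i : Fin n) :
    I.min = (i : WithTop (Fin n)) ↔ i ∈ I ∧ ∀ x ∈ I, i ≤ x := by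
  constructor
  · intro h
    exact ⟨Finset.mem_of_min h, fun x hx => Finset.min_le_of_eq hx h⟩
  · rintro ⟨h1, h2⟩
    exact le_antisymm (Finset.min_le h1) (Finset.le_min fun x hx => WithTop.coe_le_coe.2 (h2 x hx))

lemma restrictedSum_eq {m n : ℕ} (T : Matrix (Fin m) (Fin n) ℝ) (i : Fin m) (j : Fin n)
    (b : ℕ) : restrictedSum T i j b =
      ∑ P ∈ restrictedPaths i j b, gammaWeight T P.1 P.2 := by
  unfold restrictedSum
  rw [Finset.sum_sigma']
  refine Finset.sum_bij' (fun x _ => (x.1, x.2)) (fun P _ => ⟨P.1, P.2⟩) ?_ ?_ ?_ ?_ ?_ <;>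
    simp +contextual [restrictedPaths, min_eq_coe_iff]

lemma XGamma_eq {m n : ℕ} (T : Matrix (Fin m) (Fin n) ℝ) (i : Fin m) (j : Fin n) :
    XGamma T i j = restrictedSum T i j n := by
  simp [XGamma, restrictedSum]

lemma restrictedSum_of_le {m n : ℕ} (T : Matrix (Fin m) (Fin n) ℝ) (i : Fin m) (j : Fin n)
    (b : ℕ) (h : b ≤ j) : restrictedSum T i j b = 0 := by
  rw [restrictedSum_eq]
  apply Finset.sum_eq_zero
  intro P hP
  simp only [restrictedPaths, Finset.mem_filter] at hP
  have := hP.2.2.2.2 j hP.2.2.1.1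
  omega

/-- If only columns up to `j` are allowed, the path has the single turn `(i, j)`. -/
lemma restrictedSum_self {m n : ℕ} (T : Matrix (Fin m) (Fin n) ℝ) (i : Fin m) (j : Fin n) :
    restrictedSum T i j (j + 1) = T i j := by
  rw [restrictedSum_eq, ← gammaWeight_singleton T i j]
  apply Finset.sum_eq_single_of_mem (({i}, {j}) : Finset (Fin m) × Finset (Fin n))
  · simp [restrictedPaths]
  · rintro ⟨I, J⟩ hP hne
    exfalso
    simp only [restrictedPaths, Finset.mem_filter] at hP
    obtain ⟨-, ⟨h1, h2⟩, ⟨h3, h4⟩, h5, h6⟩ := hP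
    have hJ : J = {j} := by
      refine Finset.eq_singleton_iff_unique_mem.2 ⟨h3, fun x hx => ?_⟩
      have := h6 x hx
      exact le_antisymm (Fin.le_def.2 (by omega)) (h4 x hx)
    subst hJ
    obtain ⟨y, rfl⟩ := Finset.card_eq_one.1 (h5.symm.trans (by simp))
    simp at h1
    subst h1
    exact hne rfl

/-- A path starting in the last row has the single turn `(i, j)`. -/
lemma restrictedSum_last {m n : ℕ} (T : Matrix (Fin m) (Fin n) ℝ) (i : Fin m) (j : Fin n)
    (b : ℕ) (hi : (i : ℕ) + 1 = m) (hb : (j : ℕ) < b) : restrictedSum T i j b = T i j := by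
  rw [restrictedSum_eq, ← gammaWeight_singleton T i j]
  apply Finset.sum_eq_single_of_mem (({i}, {j}) : Finset (Fin m) × Finset (Fin n))
  · simp [restrictedPaths, hb]
  · rintro ⟨I, J⟩ hP hne
    exfalso
    simp only [restrictedPaths, Finset.mem_filter] at hP
    obtain ⟨-, ⟨h1, h2⟩, ⟨h3, h4⟩, h5, h6⟩ := hP
    have hI : I = {i} := by
      refine Finset.eq_singleton_iff_unique_mem.2 ⟨h1, fun x hx => ?_⟩
      exact le_antisymm (Fin.le_def.2 (by omega)) (h2 x hx)
    subst hI
    obtain ⟨y, rfl⟩ := Finset.card_eq_one.1 (h5.trans (by simp))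
    simp at h3
    subst h3
    exact hne rfl

/-- The pairs `(I, J)` encoding what may follow the first turn of a path ending at column vertex
`j` when that first turn is at `(i, b)`: the remaining turns lie strictly below row `i` and
strictly to the left of column `b`. -/
def turnTails {m n : ℕ} (i : Fin m) (j b : Fin n) : Finset (Finset (Fin m) × Finset (Fin n)) :=
  Finset.univ.filter fun P =>
    (∀ x ∈ P.1, i < x) ∧ (j ∈ P.2 ∧ ∀ x ∈ P.2, j ≤ x) ∧ P.2.card = P.1.card ∧ ∀ x ∈ P.2, x < b

/-- The paths with turns in columns `≤ b` either avoid column `b` or have their first turn at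
`(i, b)`. -/
lemma sum_restrictedPaths_succ {m n : ℕ} (i : Fin m) (j b : Fin n) (hjb : j < b)
    (f : Finset (Fin m) → Finset (Fin n) → ℝ) :
    ∑ P ∈ restrictedPaths i j (b + 1), f P.1 P.2 =
      ∑ P ∈ restrictedPaths i j b, f P.1 P.2 +
        ∑ P ∈ turnTails i j b, f (insert i P.1) (insert b P.2) := by
  rw [← Finset.sum_filter_not_add_sum_filter _ (fun P => b ∈ P.2)]
  congr 1
  · apply Finset.sum_congr _ (fun _ _ => rfl)
    ext ⟨I, J⟩
    simp only [restrictedPaths, Finset.mem_filter, Finset.mem_univ, true_and]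
    constructor
    · rintro ⟨⟨h1, h2, h3, h4⟩, h5⟩
      refine ⟨h1, h2, h3, fun x hx => ?_⟩
      have h6 := h4 x hx
      have : (x : ℕ) ≠ b := fun h => h5 (Fin.ext h ▸ hx)
      omega
    · rintro ⟨h1, h2, h3, h4⟩
      exact ⟨⟨h1, h2, h3, fun x hx => by have := h4 x hx; omega⟩, fun h => lt_irrefl _ (h4 b h)⟩
  · refine Finset.sum_bij' (fun P _ => (P.1.erase i, P.2.erase b))
      (fun P _ => (insert i P.1, insert b P.2)) ?_ ?_ ?_ ?_ ?_
    · rintro ⟨I, J⟩ hP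
      simp only [restrictedPaths, turnTails, Finset.mem_filter, Finset.mem_univ, true_and,
        Finset.mem_erase] at hP ⊢
      obtain ⟨⟨⟨h1, h2⟩, ⟨h3, h4⟩, h5, h6⟩, h7⟩ := hP
      refine ⟨fun x hx => lt_of_le_of_ne (h2 x hx.2) (Ne.symm hx.1),
        ⟨⟨hjb.ne, h3⟩, fun x hx => h4 x hx.2⟩, ?_, fun x hx => ?_⟩
      · rw [Finset.card_erase_of_mem h1, Finset.card_erase_of_mem h7, h5]
      · have := h6 x hx.2
        exact lt_of_le_of_ne (Fin.le_def.2 (by omega)) hx.1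
    · rintro ⟨I, J⟩ hP
      simp only [restrictedPaths, turnTails, Finset.mem_filter, Finset.mem_univ, true_and,
        Finset.mem_insert, forall_eq_or_imp] at hP ⊢
      obtain ⟨h1, ⟨h3, h4⟩, h5, h6⟩ := hP
      refine ⟨⟨⟨by simp, le_rfl, fun x hx => (h1 x hx).le⟩, ⟨Or.inr h3, hjb.le, h4⟩, ?_,
        by omega, fun x hx => by have := Fin.lt_def.1 (h6 x hx); omega⟩, by simp⟩
      rw [Finset.card_insert_of_notMem (fun h => lt_irrefl _ (h1 i h)),
        Finset.card_insert_of_notMem (fun h => lt_irrefl _ (h6 b h)), h5]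
    · rintro ⟨I, J⟩ hP
      simp only [restrictedPaths, Finset.mem_filter] at hP
      simp [Finset.insert_erase hP.1.2.1.1, Finset.insert_erase hP.2]
    · rintro ⟨I, J⟩ hP
      simp only [turnTails, Finset.mem_filter] at hP
      simp [Finset.erase_insert (fun h => lt_irrefl _ (hP.2.1 i h)),
        Finset.erase_insert (fun h => lt_irrefl _ (hP.2.2.2.2 b h))]
    · rintro ⟨I, J⟩ hP
      simp only [restrictedPaths, Finset.mem_filter] at hP
      simp [Finset.insert_erase hP.1.2.1.1, Finset.insert_erase hP.2]

/-- What follows a first turn in row `i` either turns in row `i + 1`, and is then a path from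
that row vertex, or stays strictly below row `i + 1`. -/
lemma sum_turnTails {m n : ℕ} (i i' : Fin m) (hi : (i' : ℕ) = i + 1) (j b : Fin n)
    (f : Finset (Fin m) → Finset (Fin n) → ℝ) :
    ∑ P ∈ turnTails i j b, f P.1 P.2 =
      ∑ P ∈ restrictedPaths i' j b, f P.1 P.2 + ∑ P ∈ turnTails i' j b, f P.1 P.2 := by
  rw [← Finset.sum_filter_add_sum_filter_not _ (fun P => i' ∈ P.1)]
  congr 1
  · apply Finset.sum_congr _ (fun _ _ => rfl)
    ext ⟨I, J⟩
    simp only [restrictedPaths, turnTails, Finset.mem_filter, Finset.mem_univ, true_and]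
    constructor
    · rintro ⟨⟨h1, h2, h3, h4⟩, h5⟩
      refine ⟨⟨h5, fun x hx => ?_⟩, h2, h3, h4⟩
      have := Fin.lt_def.1 (h1 x hx)
      exact Fin.le_def.2 (by omega)
    · rintro ⟨⟨h1, h2⟩, h3, h4, h5⟩
      refine ⟨⟨fun x hx => ?_, h3, h4, h5⟩, h1⟩
      have := Fin.le_def.1 (h2 x hx)
      exact Fin.lt_def.2 (by omega)
  · apply Finset.sum_congr _ (fun _ _ => rfl)
    ext ⟨I, J⟩
    simp only [turnTails, Finset.mem_filter, Finset.mem_univ, true_and]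
    constructor
    · rintro ⟨⟨h1, h2, h3, h4⟩, h5⟩
      refine ⟨fun x hx => ?_, h2, h3, h4⟩
      have := Fin.lt_def.1 (h1 x hx)
      have : (x : ℕ) ≠ i' := fun h => h5 (Fin.ext h ▸ hx)
      exact Fin.lt_def.2 (by omega)
    · rintro ⟨h1, h2, h3, h4⟩
      refine ⟨⟨fun x hx => ?_, h2, h3, h4⟩, fun h => lt_irrefl _ (h1 _ h)⟩
      have := Fin.lt_def.1 (h1 x hx)
      exact Fin.lt_def.2 (by omega)

/-- Paths from row `i` whose first turn is in column `b > j` correspond to paths from row `i + 1`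
with all turns in columns `≤ b`: slide the first turn one row down, or delete it if row `i + 1`
already has a turn. The weights differ by the factor `t_{i,b} / t_{i+1,b}`. -/
lemma restrictedSum_succ {m n : ℕ} (T : Matrix (Fin m) (Fin n) ℝ) (hT : EntrywisePos T)
    (i i' : Fin m) (hi : (i' : ℕ) = i + 1) (j b : Fin n) (hjb : j < b) :
    restrictedSum T i j (b + 1) =
      restrictedSum T i j b + T i b * (T i' b)⁻¹ * restrictedSum T i' j (b + 1) := by
  simp only [restrictedSum_eq]
  rw [sum_restrictedPaths_succ i j b hjb, sum_restrictedPaths_succ i' j b hjb,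
    sum_turnTails i i' hi j b (fun I J => gammaWeight T (insert i I) (insert b J)), mul_add,
    Finset.mul_sum, Finset.mul_sum]
  congr 2
  · apply Finset.sum_congr rfl
    rintro ⟨I, J⟩ hP
    simp only [restrictedPaths, Finset.mem_filter] at hP
    obtain ⟨-, h1, h2, h3, h4⟩ := hP
    refine gammaWeight_insert T I J i i' b (fun x hx => ?_) (fun x hx => h4 x hx) h3
      ((min_eq_coe_iff _ _).2 h1)
    have := Fin.le_def.1 (h1.2 x hx)
    exact Fin.lt_def.2 (by omega)
  · apply Finset.sum_congr rfl
    rintro ⟨I, J⟩ hP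
    simp only [turnTails, Finset.mem_filter] at hP
    obtain ⟨-, h1, h2, h3, h4⟩ := hP
    have hI : I.Nonempty := by
      rw [← Finset.card_pos, ← h3, Finset.card_pos]
      exact ⟨j, h2.1⟩
    obtain ⟨a, ha⟩ := Finset.min_of_nonempty hI
    have hlt : ∀ x ∈ I, i < x := fun x hx => by
      have := Fin.lt_def.1 (h1 x hx)
      exact Fin.lt_def.2 (by omega)
    rw [gammaWeight_insert T I J i a b hlt h4 h3 ha, gammaWeight_insert T I J i' a b h1 h4 h3 ha]
    have := (hT i' b).ne'
    field_simp

/-- `restrictedSum_succ` as a row operation, valid in every column `j`, for a row that is not the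
last one. -/
lemma restrictedSum_row_op {m n : ℕ} (T : Matrix (Fin m) (Fin n) ℝ) (hT : EntrywisePos T)
    (i i' : Fin m) (hi : (i' : ℕ) = i + 1) (j b : Fin n) :
    restrictedSum T i j b =
      restrictedSum T i j (b + 1) - T i b * (T i' b)⁻¹ * restrictedSum T i' j (b + 1) := by
  rcases lt_trichotomy j b with h | h | h
  · rw [restrictedSum_succ T hT i i' hi j b h]; ring
  · subst h
    have := (hT i' j).ne'
    rw [restrictedSum_self, restrictedSum_self, restrictedSum_of_le _ _ _ _ le_rfl]
    field_simp
    ring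
  · have h := Fin.lt_def.1 h
    rw [restrictedSum_of_le _ _ _ _ (by omega), restrictedSum_of_le _ _ _ _ (by omega),
      restrictedSum_of_le _ _ _ _ (by omega)]
    ring

/-- Restricting the columns amounts to adding to row `i` of `X_Γ(T)` a combination of the
`d = n - b` rows below it (those which exist). The bound on `j` is needed because `i` may be so
close to the last row that fewer than `d` rows are available. -/
lemma restrictedSum_eq_row_comb {m n : ℕ} (T : Matrix (Fin m) (Fin n) ℝ) (hT : EntrywisePos T)
    (b d : ℕ) (hbd : b + d = n) (i : Fin m) :
    ∃ a : Fin m → ℝ, (∀ k, ¬ (i < k ∧ (k : ℕ) ≤ i + d) → a k = 0) ∧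
      ∀ j : Fin n, (j : ℕ) + i + 2 ≤ b + m →
        restrictedSum T i j b = XGamma T i j + ∑ k, a k * XGamma T k j := by
  induction d generalizing b i with
  | zero =>
    refine ⟨0, by simp, fun j _ => ?_⟩
    have : b = n := by omega
    simp [XGamma_eq, this]
  | succ d ih =>
    by_cases hi : (i : ℕ) + 1 < m
    · obtain ⟨a, ha, ha'⟩ := ih (b + 1) (by omega) i
      obtain ⟨c, hc, hc'⟩ := ih (b + 1) (by omega) ⟨i + 1, hi⟩
      let b' : Fin n := ⟨b, by omega⟩
      let q := T i b' * (T ⟨i + 1, hi⟩ b')⁻¹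
      refine ⟨fun k => a k - q * (c k + if k = ⟨i + 1, hi⟩ then 1 else 0), ?_, ?_⟩
      · intro k hk
        beta_reduce
        rw [ha k, hc k, if_neg]
        · simp
        · rintro rfl
          apply hk
          simp only [Fin.lt_def]
          omega
        · simp only [Fin.lt_def] at hk ⊢
          omega
        · simp only [Fin.lt_def] at hk ⊢
          omega
      · intro j hj
        have := restrictedSum_row_op T hT i ⟨i + 1, hi⟩ rfl j b'
        rw [show (b' : ℕ) = b from rfl, ha' j (by omega), hc' j (by simp only; omega)] at this
        rw [this]
        simp only [sub_mul, mul_assoc, Finset.sum_sub_distrib, ← Finset.mul_sum, add_mul,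
          Finset.sum_add_distrib, ite_mul, one_mul, zero_mul, Finset.sum_ite_eq',
          Finset.mem_univ, if_true]
        ring
    · refine ⟨0, by simp, fun j hj => ?_⟩
      rw [XGamma_eq, restrictedSum_last _ _ _ _ (by omega) (by omega),
        restrictedSum_last _ _ _ _ (by omega) (by omega)]
      simp

/-! ### Minors of the path-sum matrix -/

/-- If adding to the top row of `B` a combination of the other rows yields `(r, 0, …, 0)`, then
`det B` is `r` times the minor obtained by deleting the first row and column. -/
lemma det_eq_of_top_row {N : ℕ} (B : Matrix (Fin (N + 1)) (Fin (N + 1)) ℝ) (c : Fin N → ℝ) (r : ℝ)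
    (h0 : B 0 0 + ∑ s, c s * B s.succ 0 = r)
    (h1 : ∀ t : Fin N, B 0 t.succ + ∑ s, c s * B s.succ t.succ = 0) :
    B.det = r * (B.submatrix Fin.succ Fin.succ).det := by
  have h := Matrix.det_updateRow_sum B 0 (Fin.cons 1 c)
  rw [Fin.cons_zero, one_smul] at h
  have hr : ∀ t, (∑ k, (Fin.cons 1 c : Fin (N + 1) → ℝ) k • B k) t =
      B 0 t + ∑ s, c s * B s.succ t := by
    intro t
    simp [Fin.sum_univ_succ]
  have hB : (B.updateRow 0 (∑ k, (Fin.cons 1 c : Fin (N + 1) → ℝ) k • B k)).submatrix Fin.succ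
      (Fin.succAbove 0) = B.submatrix Fin.succ Fin.succ := by
    ext s t
    simp
  rw [← h, Matrix.det_succ_row_zero, Fin.sum_univ_succ, hB]
  simp only [Matrix.updateRow_self, hr, h0, h1]
  simp

/-- The bordered minor is the restricted path sum times the contiguous minor. -/
lemma borderMinorTL_XGamma {m n : ℕ} (T : Matrix (Fin m) (Fin n) ℝ) (hT : EntrywisePos T)
    (i : Fin m) (j l : Fin n) (hjl : j ≤ l) :
    borderMinorTL (XGamma T) ((i : ℕ) + 1) ((j : ℕ) + 1) ((i : ℕ) + 2) ((l : ℕ) + 2) =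
      restrictedSum T i j (l + 1) * contigMinorTL (XGamma T) ((i : ℕ) + 2) ((l : ℕ) + 2) := by
  have hjl := Fin.le_def.1 hjl
  unfold borderMinorTL contigMinorTL
  rw [dif_pos (by omega)]
  by_cases h : (i : ℕ) + 2 ≤ m ∧ (l : ℕ) + 2 ≤ n
  · rw [dif_pos (by omega), dif_pos (by omega)]
    obtain ⟨a, ha, ha'⟩ := restrictedSum_eq_row_comb T hT (l + 1) (n - (l + 1)) (by omega) i
    set K := min (m - ((i : ℕ) + 2)) (n - ((l : ℕ) + 2)) with hK
    -- The rows available for the combination are exactly the rows of the contiguous minor.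
    let e : Fin (K + 1) → Fin m := fun s => ⟨i + 1 + s, by have := s.isLt; omega⟩
    have he : Function.Injective e := by
      intro s t hst
      have := congrArg Fin.val hst
      simp only [e] at this
      exact Fin.ext (by omega)
    have hsum : ∀ j' : Fin n, ∑ s, a (e s) * XGamma T (e s) j' = ∑ k, a k * XGamma T k j' := by
      intro j'
      refine Fintype.sum_of_injective e he _ _ (fun k hk => ?_) (fun _ => rfl)
      rw [ha k, zero_mul]
      rintro ⟨h1, h2⟩
      have h1 := Fin.lt_def.1 h1
      exact hk ⟨⟨k - (i + 1), by omega⟩, Fin.ext (by simp only [e]; omega)⟩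
    rw [det_eq_of_top_row _ (fun s => a (e s)) (restrictedSum T i j (l + 1))]
    · congr 2
    · rw [ha' j (by omega), ← hsum j]
      rfl
    · intro t
      have ht := t.isLt
      have h2 := ha' ⟨l + 1 + t, by omega⟩ (by simp only; omega)
      rw [restrictedSum_of_le _ _ _ _ (by simp only; omega), ← hsum] at h2
      rw [h2]
      rfl
  -- The contiguous part is empty: row `i` or column `l` is the last one, so the restriction on
  -- the first turn is vacuous.
  · rw [dif_neg (by omega), dif_neg (by omega), mul_one]
    show XGamma T i j = _
    rw [XGamma_eq]
    by_cases hi : (i : ℕ) + 1 = m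
    · rw [restrictedSum_last _ _ _ _ hi (by omega), restrictedSum_last _ _ _ _ hi (by omega)]
    · rw [show (l : ℕ) + 1 = n by omega]

/-- The contiguous minors are nonzero: the one with top-left corner at `(i, l)` (0-based) is also the
bordered minor with `j = l`, hence `T i l` times the one with corner `(i + 1, l + 1)`. -/
lemma contigMinorTL_XGamma_pos {m n : ℕ} (T : Matrix (Fin m) (Fin n) ℝ) (hT : EntrywisePos T)
    (d i l : ℕ) (hd : m ≤ i + d) :
    0 < contigMinorTL (XGamma T) (i + 1) (l + 1) := by
  induction d generalizing i l with
  | zero =>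
    unfold contigMinorTL
    rw [dif_neg (by omega)]
    exact one_pos
  | succ d ih =>
    by_cases h : i < m ∧ l < n
    · have key := borderMinorTL_XGamma T hT ⟨i, h.1⟩ ⟨l, h.2⟩ ⟨l, h.2⟩ le_rfl
      have heq : contigMinorTL (XGamma T) (i + 1) (l + 1) =
          borderMinorTL (XGamma T) (i + 1) (l + 1) (i + 2) (l + 2) := by
        unfold contigMinorTL borderMinorTL
        rw [dif_pos (by omega), dif_pos (by omega)]
        split_ifs with h2
        · have hK : min (m - (i + 1)) (n - (l + 1)) + 1 = min (m - (i + 2)) (n - (l + 2)) + 2 := by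
            omega
          rw [← Matrix.det_submatrix_equiv_self (finCongr hK.symm), Matrix.submatrix_submatrix]
          congr 2
          · funext s
            apply Fin.ext
            by_cases hs : (s : ℕ) = 0
            · simp [hs]
            · simp [hs]; omega
          · funext s
            apply Fin.ext
            by_cases hs : (s : ℕ) = 0
            · simp [hs]
            · simp [hs]; omega
        · have hK : min (m - (i + 1)) (n - (l + 1)) + 1 = 1 := by omega
          rw [← Matrix.det_submatrix_equiv_self (finCongr hK.symm), Matrix.submatrix_submatrix,
            Matrix.det_unique]
          simp
      rw [heq]
      refine key.trans_gt ?_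
      rw [restrictedSum_self]
      exact mul_pos (hT _ _) (ih (i + 1) (l + 1) (by omega))
    · unfold contigMinorTL
      rw [dif_neg (by omega)]
      exact one_pos

/-- the sum of the weights of all paths from row vertex `i` to column
vertex `j` whose first Γ-turn lies in a column `≤ ℓ` equals
`det X[{i,i+1⋯},{j,ℓ+1⋯}] / det X[{i+1⋯},{ℓ+1⋯}]` (1-based indices). -/
theorem sum_restricted_paths_eq_minor_ratio {m n : ℕ} (T : Matrix (Fin m) (Fin n) ℝ)
    (hT : EntrywisePos T) (i : Fin m) (j l : Fin n) (hjl : j ≤ l) :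
    (∑ I ∈ Finset.univ.filter (fun I : Finset (Fin m) => I.min = (i : WithTop (Fin m))),
      ∑ J ∈ Finset.univ.filter (fun J : Finset (Fin n) =>
          J.min = (j : WithTop (Fin n)) ∧ J.card = I.card ∧ ∀ b ∈ J, b ≤ l),
        gammaWeight T I J)
      = borderMinorTL (XGamma T) ((i : ℕ) + 1) ((j : ℕ) + 1) ((i : ℕ) + 2) ((l : ℕ) + 2) /
          contigMinorTL (XGamma T) ((i : ℕ) + 2) ((l : ℕ) + 2) := by
  rw [borderMinorTL_XGamma T hT i j l hjl, mul_div_cancel_right₀ _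
    (contigMinorTL_XGamma_pos T hT m (i + 1) (l + 1) (by omega)).ne']
  simp only [restrictedSum, Fin.le_def, Nat.lt_succ_iff]
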